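/- arXiv:1201.6401 — 2 statements merged into one kernel-verified Lean document; each statement's English description precedes it below -/
import Mathlib

section
/- The closure (in ℝ^m) of the image F(U) equals the union, over all admissible tuples I, of the images φ_I(ℝ^{m−1}), where φ_I : ℝ^{m−1} → ℝ^m is the tropicalization of F ∘ T_I defined by φ_I(r)_ℓ = Σ_i β_{i,ℓ} · min({ν(c_{i,t}) + r_t : 1 ≤ t ≤ m−1, c_{i,t} ≠ 0} ∪ {ν(c_{i,m}) : c_{i,m} ≠ 0}). -/
/-- The additive valuation associated to the norm of a nonarchimedean normed field:
`ν x = -log ‖x‖`. -/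
noncomputable def nuVal (K : Type*) [NormedField K] (x : K) : ℝ := -Real.log ‖x‖

/-- The affine form `f_i(x) = β_{i,1} x_1 + ⋯ + β_{i,m-1} x_{m-1} + β_{i,m}`
(here with `m - 1` replaced by `m`, i.e. coefficients indexed by `Fin (m+1)`). -/
noncomputable def affForm (K : Type*) [NormedField K] {N m : ℕ}
    (B : Matrix (Fin N) (Fin (m + 1)) ℤ) (i : Fin N) (x : Fin m → K) : K :=
  (∑ t : Fin m, (B i t.castSucc : K) * x t) + (B i (Fin.last m) : K)

/-- `F(λ)_ℓ = Σ_i β_{i,ℓ} ν(f_i(λ))`. -/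
noncomputable def Fmap (K : Type*) [NormedField K] {N m : ℕ}
    (B : Matrix (Fin N) (Fin (m + 1)) ℤ) (lam : Fin m → K) (ℓ : Fin (m + 1)) : ℝ :=
  ∑ i, (B i ℓ : ℝ) * nuVal K (affForm K B i lam)

/-- `I = (i_1 < ⋯ < i_{m-1})` is admissible if the corresponding minor of `B`
is invertible over `ℚ`. -/
def Admissible {N m : ℕ} (B : Matrix (Fin N) (Fin (m + 1)) ℤ) (I : Fin m → Fin N) : Prop :=
  StrictMono I ∧ (Matrix.of fun j t : Fin m => (B (I j) t.castSucc : ℚ)).det ≠ 0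


/-- The tropicalization `φ_I(r)_ℓ = Σ_i β_{i,ℓ} · min({ν(c_{i,t}) + r_t : c_{i,t} ≠ 0} ∪
{ν(c_{i,m}) : c_{i,m} ≠ 0})`. -/
noncomputable def tropPhi (K : Type*) [NormedField K] {N m : ℕ}
    (B : Matrix (Fin N) (Fin (m + 1)) ℤ) (c : Fin N → Fin (m + 1) → ℚ)
    (r : Fin m → ℝ) (ℓ : Fin (m + 1)) : ℝ :=
  ∑ i, (B i ℓ : ℝ) *
    sInf ({x : ℝ | ∃ t : Fin m, c i t.castSucc ≠ 0 ∧ x = nuVal K ((c i t.castSucc : ℚ) : K) + r t}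
      ∪ {x : ℝ | c i (Fin.last m) ≠ 0 ∧ x = nuVal K ((c i (Fin.last m) : ℚ) : K)})

/-!
Fix `λ ∈ U` and choose, among the tuples `I`, one that maximizes `|det A_I| / ∏ |f_{i_j}(λ)|`,
where `A_I` is the minor of linear coefficients in the rows `I`. By Cramer's rule, exchanging one
row of `I` for `i` multiplies this ratio by `|c_{i,t} f_{i_t}(λ)| / |f_i(λ)|`, so maximality bounds
every linear term of `f_i` in the coordinates `x = f_I(λ)` by `|f_i(λ)|`; the ultrametric inequality
then bounds the constant term as well. Hence no cancellation occurs and `F(λ) = φ_I(ν(x))` exactly.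
The image of `φ_I` is a finite union of linear projections of polyhedra, hence closed by
Fourier–Motzkin elimination, and this gives one inclusion.

Conversely, no cancellation occurs either when the terms of each `f_i ∘ T_I` have pairwise distinct
valuations. The points `r` with this property are open and dense, so those among them that are
valuations of points are dense, and `φ_I` is continuous.
-/

open Function Matrix

section Polyhedra

/-- The index set of the inequalities that remain after Fourier–Motzkin elimination of a variable
with coefficients `a`: those not involving it, and the pairs that bound it above and below. -/
abbrev EliminationIndex {ι : Type*} (a : ι → ℝ) : Type _ :=
  {j // a j = 0} ⊕ {p // 0 < a p} × {n // a n < 0}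

/-- The right-hand sides of the system `s • a ≤ b` after Fourier–Motzkin elimination of `s`, as a
linear map in `b`. Each row of the system in which `s` has a positive coefficient is combined with
each row in which it has a negative one, so that `s` cancels. -/
def fourierMotzkin {ι : Type*} (a : ι → ℝ) : (ι → ℝ) →ₗ[ℝ] (EliminationIndex a → ℝ) :=
  LinearMap.pi <| Sum.elim (fun j => LinearMap.proj j.1)
    fun q => a q.1 • LinearMap.proj q.2.1 - a q.2 • LinearMap.proj q.1.1

theorem fourierMotzkin_nonneg_iff {ι : Type*} {a b : ι → ℝ} :
    0 ≤ fourierMotzkin a b ↔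
      (∀ j, a j = 0 → 0 ≤ b j) ∧ ∀ p n, 0 < a p → a n < 0 → 0 ≤ a p * b n - a n * b p := by
  simp only [Pi.le_def, Sum.forall, Subtype.forall, Prod.forall]
  simp only [fourierMotzkin, LinearMap.pi_apply, Sum.elim_inl, Sum.elim_inr, LinearMap.sub_apply,
    LinearMap.smul_apply, LinearMap.proj_apply, smul_eq_mul, Pi.zero_apply]
  exact and_congr_right fun _ => ⟨fun h p n hp hn => h p hp n hn, fun h p hp n hn => h p n hp hn⟩

theorem exists_between_of_finite_of_forall_le {α : Type*} [LinearOrder α] [Nonempty α]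
    {s t : Set α} (hs : s.Finite) (ht : t.Finite) (h : ∀ x ∈ s, ∀ y ∈ t, x ≤ y) :
    ∃ z, (∀ x ∈ s, x ≤ z) ∧ ∀ y ∈ t, z ≤ y := by
  rcases s.eq_empty_or_nonempty with rfl | hne
  · obtain ⟨z, hz⟩ := ht.bddBelow
    exact ⟨z, by simp, fun y hy => hz hy⟩
  · obtain ⟨z, hzs, hz⟩ := s.exists_max_image id hs hne
    exact ⟨z, hz, h z hzs⟩

theorem exists_smul_le_iff {ι : Type*} [Finite ι] {a b : ι → ℝ} :
    (∃ s : ℝ, s • a ≤ b) ↔ 0 ≤ fourierMotzkin a b := by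
  rw [fourierMotzkin_nonneg_iff]
  constructor
  · rintro ⟨s, hs⟩
    refine ⟨fun j hj => by simpa [hj] using hs j, fun p n hp hn => ?_⟩
    have hp_le : s * a p ≤ b p := hs p
    have hn_le : s * a n ≤ b n := hs n
    nlinarith
  · rintro ⟨hzero, hpair⟩
    have lower_le_upper : ∀ x ∈ (fun n => b n / a n) '' {n | a n < 0},
        ∀ y ∈ (fun p => b p / a p) '' {p | 0 < a p}, x ≤ y := by
      rintro _ ⟨n, hn, rfl⟩ _ ⟨p, hp, rfl⟩
      rw [div_le_iff_of_neg hn, div_mul_eq_mul_div, div_le_iff₀ hp]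
      linarith [hpair p n hp hn]
    obtain ⟨s, hlower, hupper⟩ :=
      exists_between_of_finite_of_forall_le (Set.toFinite _) (Set.toFinite _) lower_le_upper
    refine ⟨s, fun j => ?_⟩
    rcases lt_trichotomy (a j) 0 with hneg | hz | hpos
    · exact (div_le_iff_of_neg hneg).1 (hlower _ ⟨j, hneg, rfl⟩)
    · simpa [hz] using hzero j hz
    · exact (le_div_iff₀ hpos).1 (hupper _ ⟨j, hpos, rfl⟩)

theorem isClosed_setOf_exists_sum_smul_le {ι : Type*} [Finite ι] {m : ℕ} (v : Fin m → ι → ℝ) :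
    IsClosed {b | ∃ x : Fin m → ℝ, ∑ k, x k • v k ≤ b} := by
  induction m generalizing ι with
  | zero => simpa using isClosed_le continuous_const continuous_id
  | succ m ih =>
    have eliminate : {b | ∃ x : Fin (m + 1) → ℝ, ∑ k, x k • v k ≤ b} =
        fourierMotzkin (v 0) ⁻¹'
          {b | ∃ x : Fin m → ℝ, ∑ k, x k • fourierMotzkin (v 0) (v k.succ) ≤ b} := by
      ext b
      simp only [Set.mem_ofPred_eq, Set.mem_preimage, Fin.exists_fin_succ_pi, Fin.sum_univ_succ,
        Fin.cons_zero, Fin.cons_succ]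
      rw [exists_comm]
      simp only [← le_sub_iff_add_le, exists_smul_le_iff, map_sub, map_sum, map_smul, sub_nonneg]
    rw [eliminate]
    exact (ih _).preimage (LinearMap.continuous_of_finiteDimensional _)

variable {E : Type*} [AddCommGroup E] [Module ℝ E]

theorem setOf_forall_eq_iInf_add {ι : Type*} {σ : ι → Type*} [∀ i, Finite (σ i)]
    (v : ∀ i, σ i → ℝ) (a : ∀ i, σ i → E →ₗ[ℝ] ℝ) (τ : ∀ i, σ i) :
    {x | ∀ i, v i (τ i) + a i (τ i) x = ⨅ s, (v i s + a i s x)} =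
      {x | LinearMap.pi (fun q : Σ i, σ i => a q.1 (τ q.1) - a q.1 q.2) x ≤
        fun q => v q.1 q.2 - v q.1 (τ q.1)} := by
  ext x
  simp only [Set.mem_ofPred_eq, Pi.le_def, Sigma.forall, LinearMap.pi_apply, LinearMap.sub_apply]
  refine forall_congr' fun i => ⟨fun h s => ?_, fun h => ?_⟩
  · linarith [ciInf_le (Set.finite_range fun s => v i s + a i s x).bddBelow s]
  · have : Nonempty (σ i) := ⟨τ i⟩
    exact le_antisymm (le_ciInf fun s => by linarith [h s])
      (ciInf_le (Set.finite_range _).bddBelow _)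

variable [FiniteDimensional ℝ E]

theorem isClosed_setOf_exists_map_le {ι : Type*} [Finite ι] (A : E →ₗ[ℝ] (ι → ℝ)) :
    IsClosed {b | ∃ x, A x ≤ b} := by
  let e := Module.finBasis ℝ E
  have hA : ∀ x, A (e.equivFun.symm x) = ∑ k, x k • A (e k) := fun x => by
    simp only [Module.Basis.equivFun_symm_apply, map_sum, map_smul]
  simpa only [e.equivFun.symm.surjective.exists, hA] using
    isClosed_setOf_exists_sum_smul_le fun k => A (e k)

theorem isClosed_map_image_setOf_le {ι κ : Type*} [Finite ι] [Finite κ]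
    (L : E →ₗ[ℝ] (κ → ℝ)) (A : E →ₗ[ℝ] (ι → ℝ)) (b : ι → ℝ) :
    IsClosed (L '' {x | A x ≤ b}) := by
  let graph : E →ₗ[ℝ] (ι ⊕ κ ⊕ κ → ℝ) :=
    LinearMap.pi <| Sum.elim (fun j => LinearMap.proj j ∘ₗ A) <|
      Sum.elim (fun k => LinearMap.proj k ∘ₗ L) fun k => LinearMap.proj k ∘ₗ (-L)
  let bounds : (κ → ℝ) → (ι ⊕ κ ⊕ κ → ℝ) := fun y => Sum.elim b (Sum.elim y (-y))
  have hgraph : ∀ x y, graph x ≤ bounds y ↔ A x ≤ b ∧ L x = y := by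
    intro x y
    simp [graph, bounds, Pi.le_def, le_antisymm_iff]
  have hbounds : Continuous bounds := by
    refine continuous_pi ?_
    rintro (j | k | k) <;> simp only [bounds, Sum.elim_inl, Sum.elim_inr] <;> fun_prop
  have himage : L '' {x | A x ≤ b} = bounds ⁻¹' {b' | ∃ x, graph x ≤ b'} := by
    ext y
    simp [hgraph]
  rw [himage]
  exact (isClosed_setOf_exists_map_le graph).preimage hbounds

theorem isClosed_range_map_iInf_add {ι κ : Type*} [Finite ι] [Finite κ] {σ : ι → Type*}
    [∀ i, Finite (σ i)] [∀ i, Nonempty (σ i)] (L : (ι → ℝ) →ₗ[ℝ] (κ → ℝ))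
    (v : ∀ i, σ i → ℝ) (a : ∀ i, σ i → E →ₗ[ℝ] ℝ) :
    IsClosed (Set.range fun x => L fun i => ⨅ s, (v i s + a i s x)) := by
  let cell (τ : ∀ i, σ i) : Set E := {x | ∀ i, v i (τ i) + a i (τ i) x = ⨅ s, (v i s + a i s x)}
  have hrange : (Set.range fun x => L fun i => ⨅ s, (v i s + a i s x)) = ⋃ τ : ∀ i, σ i,
      (fun y => y - L fun i => v i (τ i)) ⁻¹'
        ((L ∘ₗ LinearMap.pi fun i => a i (τ i)) '' cell τ) := by
    ext y
    simp only [Set.mem_range, Set.mem_iUnion, Set.mem_preimage, Set.mem_image]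
    constructor
    · rintro ⟨x, rfl⟩
      choose τ hτ using fun i => exists_eq_ciInf_of_finite (f := fun s => v i s + a i s x)
      refine ⟨τ, x, hτ, ?_⟩
      rw [eq_sub_iff_add_eq', LinearMap.comp_apply, ← map_add]
      exact congrArg L (funext hτ)
    · rintro ⟨τ, x, hx, hy⟩
      refine ⟨x, ?_⟩
      rw [eq_sub_iff_add_eq', LinearMap.comp_apply, ← map_add] at hy
      rw [← hy]
      exact congrArg L (funext fun i => (hx i).symm)
  rw [hrange]
  refine isClosed_iUnion_of_finite fun τ => IsClosed.preimage (by fun_prop) ?_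
  simp only [cell, setOf_forall_eq_iInf_add]
  exact isClosed_map_image_setOf_le _ _ _

end Polyhedra

section Genericity

theorem dense_setOf_forall_apply_ne {E κ : Type*} [NormedAddCommGroup E] [NormedSpace ℝ E]
    [FiniteDimensional ℝ E] [Countable κ] {a : κ → E →ₗ[ℝ] ℝ} (ha : ∀ j, a j ≠ 0) (b : κ → ℝ) :
    Dense {x | ∀ j, a j x ≠ b j} := by
  have hcont : ∀ j, Continuous (a j) := fun j => (a j).continuous_of_finiteDimensional
  have hopen : ∀ j, IsOpenMap (a j) := fun j =>
    (a j).isOpenMap_of_finiteDimensional (LinearMap.surjective (ha j))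
  simpa only [Set.ofPred_forall] using dense_iInter_of_isOpen
    (fun j => isOpen_ne_fun (hcont j) continuous_const)
    fun j => (dense_compl_singleton (b j)).preimage (hopen j)

/-- Appends the coordinate `0`, the valuation of the constant term's variable `1`: an affine form
in `m` variables is treated as a linear form in `m + 1` variables whose last one equals `1`. -/
def snocZero (m : ℕ) : (Fin m → ℝ) →ₗ[ℝ] (Fin (m + 1) → ℝ) where
  toFun r := Fin.snoc r 0
  map_add' r r' := by
    ext s
    cases s using Fin.lastCases <;> simp
  map_smul' a r := by
    ext s
    cases s using Fin.lastCases <;> simp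

theorem snocZero_castSucc {m : ℕ} (r : Fin m → ℝ) (t : Fin m) : snocZero m r t.castSucc = r t := by
  simp [snocZero]

theorem snocZero_last {m : ℕ} (r : Fin m → ℝ) : snocZero m r (Fin.last m) = 0 := by
  simp [snocZero]

theorem exists_injective_snocZero (m : ℕ) : ∃ r, Injective (snocZero m r) := by
  have hval : snocZero m (fun t => (t : ℝ) - m) = fun s : Fin (m + 1) => (s : ℝ) - m := by
    ext s
    cases s using Fin.lastCases <;> simp [snocZero_castSucc, snocZero_last]
  refine ⟨fun t => t - m, hval ▸ fun s s' h => ?_⟩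
  simpa [Fin.val_inj] using h

theorem isOpen_setOf_forall_injective_add_snocZero {ι : Type*} [Finite ι] {m : ℕ}
    (v : ι → Fin (m + 1) → ℝ) : IsOpen {r | ∀ i, Injective (v i + snocZero m r)} := by
  have hcont := (snocZero m).continuous_of_finiteDimensional
  simp only [injective_iff_pairwise_ne, Pairwise, Set.ofPred_forall]
  refine isOpen_iInter_of_finite fun i => isOpen_iInter_of_finite fun s =>
    isOpen_iInter_of_finite fun s' => isOpen_iInter_of_finite fun _ => isOpen_ne_fun ?_ ?_ <;>
  exact (continuous_apply _).comp (continuous_const.add hcont)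

theorem dense_setOf_forall_injective_add_snocZero {ι : Type*} [Countable ι] {m : ℕ}
    (v : ι → Fin (m + 1) → ℝ) : Dense {r | ∀ i, Injective (v i + snocZero m r)} := by
  let a (q : ι × {p : Fin (m + 1) × Fin (m + 1) // p.1 ≠ p.2}) : (Fin m → ℝ) →ₗ[ℝ] ℝ :=
    LinearMap.proj q.2.1.1 ∘ₗ snocZero m - LinearMap.proj q.2.1.2 ∘ₗ snocZero m
  obtain ⟨r₀, hr₀⟩ := exists_injective_snocZero m
  have ha : ∀ q, a q ≠ 0 := fun q hq => q.2.2 <| hr₀ <| by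
    simpa [a, sub_eq_zero] using LinearMap.congr_fun hq r₀
  have hsub : {r | ∀ q, a q r ≠ v q.1 q.2.1.2 - v q.1 q.2.1.1} ⊆
      {r | ∀ i, Injective (v i + snocZero m r)} := by
    intro r hr i s s' h
    by_contra hne
    refine hr (i, ⟨(s, s'), hne⟩) ?_
    simp only [Pi.add_apply] at h
    simp only [a, LinearMap.comp_apply, LinearMap.sub_apply, LinearMap.proj_apply]
    linarith
  exact (dense_setOf_forall_apply_ne ha _).mono hsub

theorem dense_range_nuVal_inter_generic {K ι : Type*} [NormedField K] [Finite ι]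
    (hdense : DenseRange fun x : Kˣ => nuVal K x) {m : ℕ} (v : ι → Fin (m + 1) → ℝ) :
    Dense ((Set.range fun (x : Fin m → Kˣ) t => nuVal K (x t)) ∩
      {r | ∀ i, Injective (v i + snocZero m r)}) :=
  (DenseRange.piMap fun _ => hdense).inter_of_isOpen_right
    (dense_setOf_forall_injective_add_snocZero v) (isOpen_setOf_forall_injective_add_snocZero v)

end Genericity

section TropicalForm

variable {K : Type*} [NormedField K] {ι : Type*}

theorem nuVal_mul {x y : K} (hx : x ≠ 0) (hy : y ≠ 0) :
    nuVal K (x * y) = nuVal K x + nuVal K y := by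
  rw [nuVal, norm_mul, Real.log_mul (norm_ne_zero_iff.2 hx) (norm_ne_zero_iff.2 hy), neg_add,
    nuVal, nuVal]

theorem nuVal_le_nuVal_of_norm_le {x y : K} (hx : x ≠ 0) (h : ‖x‖ ≤ ‖y‖) :
    nuVal K y ≤ nuVal K x :=
  neg_le_neg (Real.log_le_log (norm_pos_iff.2 hx) h)

/-- The tropicalization of the linear form `∑ s, d s * X s`, as a function of the valuations `r` of
the variables. The zero form has the junk value `0`. -/
noncomputable def tropLin (K : Type*) [NormedField K] {ι : Type*} (d : ι → K) (r : ι → ℝ) : ℝ :=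
  ⨅ s : support d, (nuVal K (d s) + r s)

theorem continuous_tropLin [Finite ι] (d : ι → K) : Continuous (tropLin K d) := by
  cases nonempty_fintype ι
  classical
  unfold tropLin
  cases isEmpty_or_nonempty (support d)
  · simpa only [Real.iInf_of_isEmpty] using continuous_const
  · simp only [← Finset.inf'_univ_eq_ciInf]
    fun_prop

theorem norm_le_norm_sum_of_injOn_support {M : Type*} [NormedAddCommGroup M] [IsUltrametricDist M]
    [Fintype ι] {f : ι → M} (hf : Set.InjOn (fun s => ‖f s‖) (support f)) (s : ι) :
    ‖f s‖ ≤ ‖∑ s, f s‖ := by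
  classical
  rcases eq_or_ne (f s) 0 with hs | hs
  · simp [hs]
  have hpair : Set.Pairwise (Finset.univ.filter (f · ≠ 0) : Finset ι)
      fun s s' => ‖f s‖₊ ≠ ‖f s'‖₊ := fun s hs s' hs' hne h =>
    hne (hf (by simpa using hs) (by simpa using hs') (congrArg NNReal.toReal h))
  suffices ‖f s‖₊ ≤ ‖∑ s, f s‖₊ from this
  rw [← Finset.sum_filter_ne_zero, IsUltrametricDist.nnnorm_sum_eq_sup_of_pairwise_ne hpair]
  exact Finset.le_sup (f := fun s => ‖f s‖₊) (by simpa using hs)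

theorem tropLin_nuVal_eq_nuVal_sum [IsUltrametricDist K] [Fintype ι] {d x : ι → K}
    (hx : ∀ s, x s ≠ 0) (hsum : ∑ s, d s * x s ≠ 0)
    (hle : ∀ s, ‖d s * x s‖ ≤ ‖∑ s, d s * x s‖) :
    tropLin K d (fun s => nuVal K (x s)) = nuVal K (∑ s, d s * x s) := by
  have hterm : ∀ s : support d, nuVal K (d s) + nuVal K (x s) = nuVal K (d s * x s) :=
    fun s => (nuVal_mul s.2 (hx s)).symm
  have hbelow : ∀ s : support d, nuVal K (∑ s, d s * x s) ≤ nuVal K (d s * x s) :=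
    fun s => nuVal_le_nuVal_of_norm_le (mul_ne_zero s.2 (hx s)) (hle s)
  obtain ⟨s, -, hs⟩ := IsUltrametricDist.exists_norm_finsetSum_le_of_nonempty
    (Finset.nonempty_of_sum_ne_zero hsum) fun s => d s * x s
  have hds : d s ≠ 0 := fun h => hsum <| by simpa [h] using hs
  have : Nonempty (support d) := ⟨⟨s, hds⟩⟩
  simp only [tropLin, hterm]
  exact le_antisymm
    ((ciInf_le ⟨_, Set.forall_mem_range.2 hbelow⟩ ⟨s, hds⟩).trans
      (nuVal_le_nuVal_of_norm_le hsum hs))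
    (le_ciInf hbelow)

end TropicalForm

section TropPhi

variable {K : Type*} [NormedField K] {N m : ℕ} {B : Matrix (Fin N) (Fin (m + 1)) ℤ}
  {c : Fin N → Fin (m + 1) → ℚ}

theorem affForm_eq_sum_snoc_iff {i : Fin N} {lam x : Fin m → K} :
    affForm K B i lam = ∑ t, (c i t.castSucc : K) * x t + (c i (Fin.last m) : K) ↔
      affForm K B i lam = ∑ s, (c i s : K) * (Fin.snoc x 1 : Fin (m + 1) → K) s := by
  simp [Fin.sum_univ_castSucc]

theorem snocZero_nuVal (x : Fin m → K) :
    snocZero m (fun t => nuVal K (x t)) =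
      fun s => nuVal K ((Fin.snoc x 1 : Fin (m + 1) → K) s) := by
  ext s
  cases s using Fin.lastCases <;> simp [snocZero_castSucc, snocZero_last, nuVal]

theorem snoc_one_ne_zero {x : Fin m → K} (hx : ∀ t, x t ≠ 0) (s : Fin (m + 1)) :
    (Fin.snoc x 1 : Fin (m + 1) → K) s ≠ 0 := by
  cases s using Fin.lastCases <;> simp [hx]

variable [CharZero K]

theorem exists_affForm_ne_zero {i : Fin N} (h : ∃ ℓ, B i ℓ ≠ 0) : ∃ lam, affForm K B i lam ≠ 0 := by
  by_contra! hzero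
  have hlast : B i (Fin.last m) = 0 := by simpa [affForm] using hzero 0
  obtain ⟨ℓ, hℓ⟩ := h
  cases ℓ using Fin.lastCases with
  | last => exact hℓ hlast
  | cast t => exact hℓ (by simpa [affForm, hlast, Pi.single_apply] using hzero (Pi.single t 1))

theorem tropPhi_eq_mulVec_tropLin (r : Fin m → ℝ) :
    tropPhi K B c r = (B.map (Int.cast : ℤ → ℝ))ᵀ *ᵥ
      fun i => tropLin K (fun s => (c i s : K)) (snocZero m r) := by
  ext ℓ
  simp only [tropPhi, mulVec, dotProduct, transpose_apply, map_apply]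
  refine Finset.sum_congr rfl fun i _ => ?_
  rw [tropLin, iInf]
  congr 2
  ext y
  simp only [Set.mem_union, Set.mem_ofPred_eq, Set.mem_range, Subtype.exists, mem_support,
    Rat.cast_ne_zero, Fin.exists_iff_castSucc, snocZero_castSucc, snocZero_last, add_zero,
    exists_prop, eq_comm (a := y), or_comm]

theorem continuous_tropPhi (c : Fin N → Fin (m + 1) → ℚ) : Continuous (tropPhi K B c) := by
  simp only [funext tropPhi_eq_mulVec_tropLin]
  exact (continuous_const.matrix_mulVec (continuous_pi fun i => (continuous_tropLin _).comp
    (snocZero m).continuous_of_finiteDimensional))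

theorem isClosed_range_tropPhi (hc : ∀ i, c i ≠ 0) : IsClosed (Set.range (tropPhi K B c)) := by
  have (i : Fin N) : Nonempty (support fun s => (c i s : K)) := by
    obtain ⟨s, hs⟩ := Function.ne_iff.1 (hc i)
    exact ⟨s, by simpa using hs⟩
  have hphi : tropPhi K B c = fun r => mulVecLin (B.map (Int.cast : ℤ → ℝ))ᵀ fun i =>
      ⨅ s : support fun s => (c i s : K),
        (nuVal K (c i s : K) + (LinearMap.proj s.1 ∘ₗ snocZero m) r) :=
    funext tropPhi_eq_mulVec_tropLin
  rw [hphi]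
  exact isClosed_range_map_iInf_add _ _ _

variable [IsUltrametricDist K]

theorem Fmap_eq_tropPhi {lam x : Fin m → K} (hx : ∀ t, x t ≠ 0)
    (hlam : ∀ i, affForm K B i lam ≠ 0)
    (hform : ∀ i, affForm K B i lam = ∑ s, (c i s : K) * (Fin.snoc x 1 : Fin (m + 1) → K) s)
    (hle : ∀ i s, ‖(c i s : K) * (Fin.snoc x 1 : Fin (m + 1) → K) s‖ ≤ ‖affForm K B i lam‖) :
    Fmap K B lam = tropPhi K B c fun t => nuVal K (x t) := by
  have htrop : ∀ i, tropLin K (fun s => (c i s : K)) (snocZero m fun t => nuVal K (x t)) =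
      nuVal K (affForm K B i lam) := fun i => by
    rw [snocZero_nuVal, hform i]
    exact tropLin_nuVal_eq_nuVal_sum (snoc_one_ne_zero hx) (hform i ▸ hlam i) (hform i ▸ hle i)
  simp only [tropPhi_eq_mulVec_tropLin, htrop]
  rfl

theorem affForm_ne_zero_and_Fmap_eq_tropPhi_of_injective {lam x : Fin m → K} (hc : ∀ i, c i ≠ 0)
    (hx : ∀ t, x t ≠ 0)
    (hform : ∀ i, affForm K B i lam = ∑ s, (c i s : K) * (Fin.snoc x 1 : Fin (m + 1) → K) s)
    (hinj : ∀ i, Injective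
      ((fun s => nuVal K (c i s : K)) + snocZero m fun t => nuVal K (x t))) :
    (∀ i, affForm K B i lam ≠ 0) ∧ Fmap K B lam = tropPhi K B c fun t => nuVal K (x t) := by
  have hterm : ∀ i s, c i s ≠ 0 → (c i s : K) * (Fin.snoc x 1 : Fin (m + 1) → K) s ≠ 0 :=
    fun i s hs => mul_ne_zero (Rat.cast_ne_zero.2 hs) (snoc_one_ne_zero hx s)
  have hle : ∀ i s, ‖(c i s : K) * (Fin.snoc x 1 : Fin (m + 1) → K) s‖ ≤ ‖affForm K B i lam‖ := by
    intro i
    rw [hform i]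
    refine norm_le_norm_sum_of_injOn_support fun s hs s' hs' hnorm => hinj i ?_
    rw [snocZero_nuVal]
    simp only [Pi.add_apply]
    rw [← nuVal_mul (left_ne_zero_of_mul hs) (right_ne_zero_of_mul hs),
      ← nuVal_mul (left_ne_zero_of_mul hs') (right_ne_zero_of_mul hs')]
    exact congrArg (-Real.log ·) hnorm
  have hlam : ∀ i, affForm K B i lam ≠ 0 := fun i => by
    obtain ⟨s, hs⟩ := Function.ne_iff.1 (hc i)
    exact norm_pos_iff.1 ((norm_pos_iff.2 (hterm i s hs)).trans_le (hle i s))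
  exact ⟨hlam, Fmap_eq_tropPhi hx hlam hform hle⟩

theorem tropPhi_mem_closure_image_Fmap (hdense : DenseRange fun x : Kˣ => nuVal K x)
    (hrows : ∀ i, ∃ ℓ, B i ℓ ≠ 0) {T : (Fin m → K) → Fin m → K} (hT : Surjective T)
    (hform : ∀ i x, affForm K B i (T x) =
      ∑ t, (c i t.castSucc : K) * x t + (c i (Fin.last m) : K)) (r : Fin m → ℝ) :
    tropPhi K B c r ∈ closure (Fmap K B '' {lam | ∀ i, affForm K B i lam ≠ 0}) := by
  have hc : ∀ i, c i ≠ 0 := fun i hci => by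
    obtain ⟨lam, hlam⟩ := exists_affForm_ne_zero (K := K) (hrows i)
    obtain ⟨x, rfl⟩ := hT lam
    exact hlam (by simp [hform, hci])
  have hgeneric := dense_range_nuVal_inter_generic hdense fun i s => nuVal K (c i s : K)
  have himage := image_closure_subset_closure_image (continuous_tropPhi (K := K) (B := B) c)
    (Set.mem_image_of_mem _ (hgeneric r))
  refine closure_mono ?_ himage
  rintro _ ⟨_, ⟨⟨x, rfl⟩, hinj⟩, rfl⟩
  obtain ⟨hne, heq⟩ := affForm_ne_zero_and_Fmap_eq_tropPhi_of_injective hc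
    (fun t => (x t).ne_zero) (fun i => affForm_eq_sum_snoc_iff.1 (hform i _)) hinj
  exact ⟨_, hne, heq⟩

end TropPhi

section OptimalMinor

theorem det_submatrix_update {R ι n : Type*} [CommRing R] [Fintype n] [DecidableEq n]
    (A : Matrix ι n R) {I : n → ι} (hI : IsUnit (A.submatrix I id).det) (t : n) (i : ι) :
    (A.submatrix (update I t i) id).det =
      (A.submatrix I id).det * (A * (A.submatrix I id)⁻¹) i t := by
  have hrow : A.submatrix (update I t i) id = (A.submatrix I id).updateRow t (A i) := by
    ext s k
    rcases eq_or_ne s t with rfl | hs <;> simp [*]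
  rw [hrow, ← cramer_transpose_apply, ← det_smul_inv_vecMul_eq_cramer_transpose _ _ hI,
    ← mul_apply_eq_vecMul, Pi.smul_apply, smul_eq_mul]

theorem prod_update_mul {M n : Type*} [CommMonoid M] [Fintype n] [DecidableEq n] (f : n → M)
    (t : n) (y : M) : (∏ s, update f t y s) * f t = y * ∏ s, f s := by
  rw [Finset.prod_update_of_mem (Finset.mem_univ t), mul_assoc,
    ← Finset.prod_sdiff (Finset.subset_univ {t}), Finset.prod_singleton]

theorem exists_det_submatrix_ne_zero {k ι : Type*} [Field k] [Finite ι] {m : ℕ}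
    {A : Matrix ι (Fin m) k} (hA : A.rank = m) :
    ∃ I : Fin m → ι, (A.submatrix I id).det ≠ 0 := by
  rw [A.rank_eq_finrank_span_row] at hA
  obtain ⟨f, hf, -, hlin⟩ := Submodule.exists_fun_fin_finrank_span_eq k (Set.range A.row)
  generalize Module.finrank k (Submodule.span k (Set.range A.row)) = d at hA f hf hlin
  subst hA
  choose I hI using hf
  have hrows : A.submatrix I id = of f := funext hI
  refine ⟨I, ?_⟩
  rw [hrows, ← isUnit_iff_ne_zero, ← isUnit_iff_isUnit_det, ← linearIndependent_rows_iff_isUnit]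
  exact hlin

variable {k ι : Type*} [Field k] {m : ℕ} {v : AbsoluteValue k ℝ} {A : Matrix ι (Fin m) k}
  {ρ : ι → ℝ}

/-- The absolute value of the maximal minor of `A` in the rows `I`, relative to the weights `ρ` of
these rows. -/
noncomputable def minorRatio (v : AbsoluteValue k ℝ) (A : Matrix ι (Fin m) k) (ρ : ι → ℝ)
    (I : Fin m → ι) : ℝ :=
  v (A.submatrix I id).det / ∏ t, ρ (I t)

theorem minorRatio_comp_perm (I : Fin m → ι) (σ : Equiv.Perm (Fin m)) :
    minorRatio v A ρ (I ∘ σ) = minorRatio v A ρ I := by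
  have hdet : (A.submatrix (I ∘ σ) id).det = Equiv.Perm.sign σ * (A.submatrix I id).det :=
    det_permute σ (A.submatrix I id)
  have hsign : v ((Equiv.Perm.sign σ : ℤ) : k) = 1 := by
    rcases Int.units_eq_one_or (Equiv.Perm.sign σ) with h | h <;> simp [h]
  simp only [minorRatio, hdet, map_mul, hsign, one_mul, Function.comp_apply,
    Equiv.prod_comp σ fun t => ρ (I t)]

theorem minorRatio_update (hρ : ∀ i, 0 < ρ i) {I : Fin m → ι} (hI : (A.submatrix I id).det ≠ 0)
    (t : Fin m) (i : ι) :
    minorRatio v A ρ (update I t i) =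
      minorRatio v A ρ I * (v ((A * (A.submatrix I id)⁻¹) i t) * ρ (I t) / ρ i) := by
  have hprod : (∏ s, ρ (update I t i s)) * ρ (I t) = ρ i * ∏ s, ρ (I s) := by
    simpa only [← comp_update, Function.comp_apply] using prod_update_mul (ρ ∘ I) t (ρ i)
  have hpos : ∀ J : Fin m → ι, ∏ s, ρ (J s) ≠ 0 := fun J =>
    (Finset.prod_pos fun s _ => hρ (J s)).ne'
  rw [minorRatio, minorRatio, det_submatrix_update A hI.isUnit, map_mul]
  rw [div_mul_div_comm, div_eq_div_iff (hpos _) (mul_ne_zero (hpos I) (hρ i).ne')]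
  linear_combination
    -(v (A.submatrix I id).det * v ((A * (A.submatrix I id)⁻¹) i t)) * hprod

theorem minorRatio_pos_iff (hρ : ∀ i, 0 < ρ i) {I : Fin m → ι} :
    0 < minorRatio v A ρ I ↔ (A.submatrix I id).det ≠ 0 := by
  rw [minorRatio, div_pos_iff_of_pos_right (Finset.prod_pos fun t _ => hρ (I t)), v.pos_iff]

theorem exists_strictMono_forall_mul_le [LinearOrder ι] [Finite ι] (v : AbsoluteValue k ℝ)
    (hA : A.rank = m) (hρ : ∀ i, 0 < ρ i) :
    ∃ I : Fin m → ι, StrictMono I ∧ (A.submatrix I id).det ≠ 0 ∧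
      ∀ i t, v ((A * (A.submatrix I id)⁻¹) i t) * ρ (I t) ≤ ρ i := by
  obtain ⟨I₀, hI₀⟩ := exists_det_submatrix_ne_zero hA
  have : Nonempty (Fin m → ι) := ⟨I₀⟩
  obtain ⟨J, hJ⟩ := Finite.exists_max (minorRatio v A ρ)
  let I := J ∘ Tuple.sort J
  have hmax : ∀ I', minorRatio v A ρ I' ≤ minorRatio v A ρ I := by
    simpa only [I, minorRatio_comp_perm] using hJ
  have hpos : 0 < minorRatio v A ρ I := ((minorRatio_pos_iff hρ).2 hI₀).trans_le (hmax I₀)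
  have hdet : (A.submatrix I id).det ≠ 0 := (minorRatio_pos_iff hρ).1 hpos
  have hinj : Injective I := fun s s' h => by
    by_contra hne
    exact hdet (det_zero_of_row_eq hne (funext fun t => by simp only [submatrix_apply, h]))
  refine ⟨I, (Tuple.monotone_sort J).strictMono_of_injective hinj, hdet, fun i t => ?_⟩
  have hratio := hmax (update I t i)
  rw [minorRatio_update hρ hdet, mul_le_iff_le_one_right hpos, div_le_one (hρ i)] at hratio
  exact hratio

end OptimalMinor

section CoordinateChange

variable {N m : ℕ}

/-- The matrix of linear coefficients of the affine forms `affForm K B i`. -/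
def linearPart (B : Matrix (Fin N) (Fin (m + 1)) ℤ) : Matrix (Fin N) (Fin m) ℚ :=
  of fun i t => (B i t.castSucc : ℚ)

theorem rank_linearPart {B : Matrix (Fin N) (Fin (m + 1)) ℤ}
    (hB : (B.map (Int.cast : ℤ → ℚ)).rank = m + 1) : (linearPart B).rank = m := by
  have hcols : LinearIndependent ℚ (B.map (Int.cast : ℤ → ℚ)).col := by
    rw [linearIndependent_iff_card_eq_finrank_span, Fintype.card_fin, Set.finrank,
      ← rank_eq_finrank_span_cols, hB]
  have hcols' : LinearIndependent ℚ (linearPart B).col :=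
    hcols.comp Fin.castSucc (Fin.castSucc_injective m)
  rw [← rank_transpose]
  exact hcols'.rank_matrix.trans (Fintype.card_fin m)

/-- The coefficients of the `i`-th affine form in the coordinates given by the forms with indices
`I`, the constant term being last. They are meaningful only when these forms have linearly
independent linear parts. -/
noncomputable def coordCoeff (B : Matrix (Fin N) (Fin (m + 1)) ℤ) (I : Fin m → Fin N) (i : Fin N) :
    Fin (m + 1) → ℚ :=
  let C := linearPart B * ((linearPart B).submatrix I id)⁻¹
  Fin.snoc (C i) (B i (Fin.last m) - ∑ t, C i t * B (I t) (Fin.last m))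

variable {B : Matrix (Fin N) (Fin (m + 1)) ℤ} {I : Fin m → Fin N} {K : Type*} [NormedField K]
  [CharZero K]

theorem affForm_eq_sum_coordCoeff (hI : ((linearPart B).submatrix I id).det ≠ 0) (i : Fin N)
    (lam : Fin m → K) :
    affForm K B i lam = ∑ t, (coordCoeff B I i t.castSucc : K) * affForm K B (I t) lam +
      (coordCoeff B I i (Fin.last m) : K) := by
  let C := linearPart B * ((linearPart B).submatrix I id)⁻¹
  have hlinear : ∀ s, (B i (Fin.castSucc s) : K) = ∑ t, (C i t : K) * (B (I t) s.castSucc : K) := by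
    intro s
    have h := congrFun₂ (nonsing_inv_mul_cancel_right _ (linearPart B) hI.isUnit) i s
    simpa [mul_apply, C, linearPart] using (congrArg (Rat.cast : ℚ → K) h).symm
  have hsum : ∑ t, (C i t : K) * ∑ s : Fin m, (B (I t) s.castSucc : K) * lam s =
      ∑ s : Fin m, (B i s.castSucc : K) * lam s := by
    simp only [hlinear, Finset.mul_sum, Finset.sum_mul, ← mul_assoc]
    exact Finset.sum_comm
  simp only [coordCoeff, Fin.snoc_castSucc, Fin.snoc_last, affForm, mul_add,
    Finset.sum_add_distrib]
  push_cast
  linear_combination -hsum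

theorem bijective_affForm (hI : ((linearPart B).submatrix I id).det ≠ 0) :
    Bijective fun (lam : Fin m → K) j => affForm K B (I j) lam := by
  let A := ((linearPart B).submatrix I id).map (Rat.cast : ℚ → K)
  have hA : IsUnit A :=
    ((isUnit_iff_isUnit_det _).2 hI.isUnit).map (Rat.castHom K).mapMatrix
  have hform : (fun (lam : Fin m → K) j => affForm K B (I j) lam) =
      (· + fun j => (B (I j) (Fin.last m) : K)) ∘ A.mulVec := by
    ext lam j
    simp [affForm, A, linearPart, mulVec, dotProduct]
  rw [hform]
  exact (Equiv.addRight _).bijective.comp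
    ⟨mulVec_injective_iff_isUnit.2 hA, mulVec_surjective_iff_isUnit.2 hA⟩

theorem exists_bijective_affForm_eq (hI : ((linearPart B).submatrix I id).det ≠ 0) :
    ∃ T : (Fin m → K) → Fin m → K, Bijective T ∧ ∀ x j, affForm K B (I j) (T x) = x j := by
  let e := Equiv.ofBijective _ (bijective_affForm (K := K) hI)
  exact ⟨e.symm, e.symm.bijective, fun x => congrFun (e.apply_symm_apply x)⟩

theorem coordCoeff_ne_zero (hI : ((linearPart B).submatrix I id).det ≠ 0) {i : Fin N}
    (hi : ∃ ℓ, B i ℓ ≠ 0) : coordCoeff B I i ≠ 0 := fun hzero => by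
  obtain ⟨lam, hlam⟩ := exists_affForm_ne_zero (K := ℚ) hi
  exact hlam (by simp [affForm_eq_sum_coordCoeff hI i lam, hzero])

end CoordinateChange

section Tropicalization

variable {K : Type*} [NormedField K] [CharZero K] [IsUltrametricDist K] {N m : ℕ}
  {B : Matrix (Fin N) (Fin (m + 1)) ℤ}

theorem norm_coordCoeff_mul_le {I : Fin m → Fin N} {i : Fin N} {lam : Fin m → K}
    (hI : ((linearPart B).submatrix I id).det ≠ 0)
    (hle : ∀ t : Fin m, ‖(coordCoeff B I i t.castSucc : K)‖ * ‖affForm K B (I t) lam‖ ≤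
      ‖affForm K B i lam‖) (s : Fin (m + 1)) :
    ‖(coordCoeff B I i s : K) *
      (Fin.snoc (fun t => affForm K B (I t) lam) 1 : Fin (m + 1) → K) s‖ ≤
        ‖affForm K B i lam‖ := by
  simp only [← norm_mul] at hle
  cases s using Fin.lastCases with
  | cast t => simpa using hle t
  | last =>
    have hconst : (coordCoeff B I i (Fin.last m) : K) = affForm K B i lam -
        ∑ t, (coordCoeff B I i t.castSucc : K) * affForm K B (I t) lam :=
      eq_sub_of_add_eq' (affForm_eq_sum_coordCoeff hI i lam).symm
    have hsum := IsUltrametricDist.norm_sum_le_of_forall_le_of_nonneg (s := Finset.univ)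
      (norm_nonneg _) fun t _ => hle t
    simp only [Fin.snoc_last, mul_one, hconst, sub_eq_add_neg]
    exact (IsUltrametricDist.norm_add_le_max _ _).trans
      (max_le le_rfl ((norm_neg _).trans_le hsum))

theorem exists_admissible_Fmap_eq_tropPhi (hrank : (linearPart B).rank = m) {lam : Fin m → K}
    (hlam : ∀ i, affForm K B i lam ≠ 0) :
    ∃ I, Admissible B I ∧
      Fmap K B lam = tropPhi K B (coordCoeff B I) fun t => nuVal K (affForm K B (I t) lam) := by
  let v : AbsoluteValue ℚ ℝ :=
    (NormedField.toAbsoluteValue K).comp (f := Rat.castHom K) Rat.cast_injective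
  obtain ⟨I, hmono, hdet, hopt⟩ :=
    exists_strictMono_forall_mul_le v hrank fun i => norm_pos_iff.2 (hlam i)
  have hle : ∀ i (t : Fin m),
      ‖(coordCoeff B I i t.castSucc : K)‖ * ‖affForm K B (I t) lam‖ ≤ ‖affForm K B i lam‖ := by
    intro i t
    simp only [coordCoeff, Fin.snoc_castSucc]
    exact hopt i t
  exact ⟨I, ⟨hmono, hdet⟩, Fmap_eq_tropPhi (fun t => hlam (I t)) hlam
    (fun i => affForm_eq_sum_snoc_iff.1 (affForm_eq_sum_coordCoeff hdet i lam))
    fun i => norm_coordCoeff_mul_le hdet (hle i)⟩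

theorem closure_image_Fmap_subset (hrank : (linearPart B).rank = m)
    (hrows : ∀ i, ∃ ℓ, B i ℓ ≠ 0) :
    closure (Fmap K B '' {lam | ∀ i, affForm K B i lam ≠ 0}) ⊆
      ⋃ I : {I // Admissible B I}, Set.range (tropPhi K B (coordCoeff B I)) := by
  refine closure_minimal ?_ <| isClosed_iUnion_of_finite fun I =>
    isClosed_range_tropPhi fun i => coordCoeff_ne_zero I.2.2 (hrows i)
  rintro _ ⟨lam, hlam, rfl⟩
  obtain ⟨I, hI, heq⟩ := exists_admissible_Fmap_eq_tropPhi hrank hlam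
  exact Set.mem_iUnion.2 ⟨⟨I, hI⟩, _, heq.symm⟩

end Tropicalization

theorem stmt1_general
    (K : Type*) [NormedField K] [CharZero K] [IsUltrametricDist K]
    (hdense : DenseRange fun x : Kˣ => nuVal K x)
    {N m : ℕ} (B : Matrix (Fin N) (Fin (m + 1)) ℤ)
    (hrank : (linearPart B).rank = m)
    (hrows : ∀ i, ∃ ℓ, B i ℓ ≠ 0) :
    closure (Fmap K B '' {lam | ∀ i, affForm K B i lam ≠ 0}) =
      {y | ∃ I : Fin m → Fin N, Admissible B I ∧
        ∃ T : (Fin m → K) → (Fin m → K), Function.Bijective T ∧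
          (∀ (x : Fin m → K) (j : Fin m), affForm K B (I j) (T x) = x j) ∧
        ∃ c : Fin N → Fin (m + 1) → ℚ,
          (∀ (i : Fin N) (x : Fin m → K),
            affForm K B i (T x)
              = (∑ t : Fin m, ((c i t.castSucc : ℚ) : K) * x t) + ((c i (Fin.last m) : ℚ) : K)) ∧
        ∃ r : Fin m → ℝ, y = tropPhi K B c r} := by
  apply Set.Subset.antisymm
  · intro y hy
    obtain ⟨⟨I, hI⟩, r, rfl⟩ := Set.mem_iUnion.1 (closure_image_Fmap_subset hrank hrows hy)
    obtain ⟨T, hT, hTI⟩ := exists_bijective_affForm_eq (K := K) hI.2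
    refine ⟨I, hI, T, hT, hTI, coordCoeff B I, fun i x => ?_, r, rfl⟩
    simpa only [hTI] using affForm_eq_sum_coordCoeff hI.2 i (T x)
  · rintro _ ⟨I, -, T, hT, -, c, hform, r, rfl⟩
    exact tropPhi_mem_closure_image_Fmap hdense hrows hT.surjective hform r

theorem denseRange_nuVal_of_rat {K : Type*} [NormedField K]
    (h : ∀ q : ℚ, ∃ x : K, x ≠ 0 ∧ nuVal K x = (q : ℝ)) :
    DenseRange fun x : Kˣ => nuVal K x := by
  refine (Rat.denseRange_cast (𝕜 := ℝ)).mono ?_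
  rintro _ ⟨q, rfl⟩
  obtain ⟨x, hx, hxq⟩ := h q
  exact ⟨Units.mk0 x hx, hxq⟩

theorem stmt1
    (K : Type*) [NormedField K] [IsAlgClosed K] [CharZero K] [CompleteSpace K]
    [IsUltrametricDist K]
    (hQsub : ∀ q : ℚ, ∃ x : K, x ≠ 0 ∧ nuVal K x = (q : ℝ))
    (hQint : ∀ q : ℚ, q ≠ 0 → ∃ z : ℤ, nuVal K ((q : K)) = (z : ℝ))
    (n m : ℕ)
    (B : Matrix (Fin (n + m + 2)) (Fin (m + 1)) ℤ)
    (hrank : (B.map (Int.cast : ℤ → ℚ)).rank = m + 1)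
    (hrows : ∀ i, ∃ ℓ, B i ℓ ≠ 0)
    (hcols : ∀ ℓ, (∑ i, B i ℓ) = 0) :
    closure (Fmap K B '' {lam | ∀ i, affForm K B i lam ≠ 0}) =
      {y | ∃ I : Fin m → Fin (n + m + 2), Admissible B I ∧
        ∃ T : (Fin m → K) → (Fin m → K), Function.Bijective T ∧
          (∀ (x : Fin m → K) (j : Fin m), affForm K B (I j) (T x) = x j) ∧
        ∃ c : Fin (n + m + 2) → Fin (m + 1) → ℚ,
          (∀ (i : Fin (n + m + 2)) (x : Fin m → K),
            affForm K B i (T x)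
              = (∑ t : Fin m, ((c i t.castSucc : ℚ) : K) * x t) + ((c i (Fin.last m) : ℚ) : K)) ∧
        ∃ r : Fin m → ℝ, y = tropPhi K B c r} :=
  stmt1_general K (denseRange_nuVal_of_rat hQsub) B (rank_linearPart hrank) hrows
end

section
/- Assume at most one index j has a_j = 0. Then the complement ℝ² ∖ 𝒜 of the p-adic reduced discriminant amoeba has at most 2n² + 9n + 11 connected components. -/
/-- `z_i = -b_i / a_i`, the root of the affine form `a_i λ + b_i`. -/
def zrt {N : ℕ} (a b : Fin N → ℚ) (i : Fin N) : ℚ := -(b i) / a i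

/-- The piecewise-linear building block `g_{i,j}` of the tropical parametrization. -/
noncomputable def gfun (p : ℕ) {N : ℕ} (a b : Fin N → ℚ) (i j : Fin N) (r : ℝ) : ℝ :=
  if a j ≠ 0 then
    if zrt a b j = zrt a b i then (padicValRat p (a j) : ℝ) + r
    else (padicValRat p (a j) : ℝ) + min r ((padicValRat p (zrt a b i - zrt a b j) : ℝ))
  else (padicValRat p (b j) : ℝ)

/-- The tropical parametrization `φ_i(r) = (Σ_j a_j g_{i,j}(r), Σ_j b_j g_{i,j}(r))`. -/
noncomputable def phiMap (p : ℕ) {N : ℕ} (a b : Fin N → ℚ) (i : Fin N) (r : ℝ) : ℝ × ℝ :=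
  (∑ j, (a j : ℝ) * gfun p a b i j r, ∑ j, (b j : ℝ) * gfun p a b i j r)

/-- The `p`-adic reduced discriminant amoeba `𝒜 = ⋃_{i : a_i ≠ 0} φ_i(ℝ)`. -/
def amoeba (p : ℕ) {N : ℕ} (a b : Fin N → ℚ) : Set (ℝ × ℝ) :=
  {y | ∃ i : Fin N, a i ≠ 0 ∧ ∃ r : ℝ, phiMap p a b i r = y}

/-!
At radius `r`, the coordinates `g_{i,j}` that move are those whose root `z_j` lies in the open
`p`-adic disc of valuative radius `r` about `z_i`. While this cluster of roots is a fixed set `C`,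
the point `φ_i(r)` moves along a line which, by the ultrametric inequality, depends on `C` but not
on the center `i`. Discs are nested or disjoint, so the clusters form a laminar family of nonempty
subsets of the `N` indices and there are at most `2 * N - 1` of them. The cluster of all indices
contributes no line: there `φ_i` has velocity `∑ (a_j, b_j) = 0`, and its constant value is still
attained when the first root leaves. So the amoeba is a closed subset of `2 * N - 2` lines.

For a closed subset of `L` lines in the plane, every component of the complement meets the open
cells of the arrangement, and points with the same sign pattern are joined by a segment inside a
cell. A set of affine forms shattered by sign patterns has linearly independent linear parts, so
the patterns have VC dimension at most `2` and the Sauer–Shelah lemma bounds their number by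
`1 + L + L.choose 2`.
-/

open Finset Module

section Arrangement

variable {𝕜 E : Type*} [Field 𝕜] [AddCommGroup E] [Module 𝕜 E]

lemma exists_affineMap_eq_zero_on_line (hE : 1 < finrank 𝕜 E) (q d : E) :
    ∃ f : E →ᵃ[𝕜] 𝕜, f.linear ≠ 0 ∧ ∀ t : 𝕜, f (q + t • d) = 0 := by
  have : FiniteDimensional 𝕜 E := .of_finrank_pos (by omega)
  have hspan : Submodule.span 𝕜 {d} < ⊤ := by
    refine lt_top_iff_ne_top.2 fun h => ?_
    have hle := finrank_span_le_card (R := 𝕜) {d}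
    rw [h, finrank_top] at hle
    simp only [Set.toFinset_singleton, card_singleton] at hle
    omega
  obtain ⟨φ, hφ, hker⟩ := Submodule.exists_le_ker_of_lt_top _ hspan
  have hd : φ d = 0 := hker (Submodule.mem_span_singleton_self d)
  exact ⟨φ.toAffineMap - AffineMap.const 𝕜 E (φ q), by simpa using hφ, fun t => by simp [hd]⟩

lemma segment_subset_of_pos_iff_pos [LinearOrder 𝕜] [IsStrictOrderedRing 𝕜]
    {ι : Type*} {f : ι → E →ᵃ[𝕜] 𝕜} {x y : E} (hx : ∀ k, f k x ≠ 0)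
    (hy : ∀ k, f k y ≠ 0) (hxy : ∀ k, 0 < f k x ↔ 0 < f k y) :
    segment 𝕜 x y ⊆ {z | ∀ k, f k z ≠ 0} := by
  intro z hz k
  rcases (hx k).lt_or_gt with hneg | hpos
  · have hyneg : f k y < 0 := (hy k).lt_of_le (not_lt.1 (mt (hxy k).2 hneg.not_gt))
    exact (((convex_Iio 0).affine_preimage (f k)).segment_subset hneg hyneg hz).ne
  · exact (((convex_Ioi 0).affine_preimage (f k)).segment_subset hpos ((hxy k).1 hpos) hz).ne'

end Arrangement

section SignPatterns

variable {ι 𝕜 E : Type*} [Fintype ι] [Field 𝕜] [LinearOrder 𝕜] [AddCommGroup E] [Module 𝕜 E]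

/-- The index sets `{k | 0 < f k x}` on which a finite family `f` of affine forms is positive, as
the point `x` varies. For points off the zero sets these are the sign patterns, hence the cells, of
the hyperplane arrangement. -/
noncomputable def positivePatterns (f : ι → E →ᵃ[𝕜] 𝕜) : Finset (Finset ι) :=
  open Classical in {s | ∃ x, ({k | 0 < f k x} : Finset ι) = s}

variable {f : ι → E →ᵃ[𝕜] 𝕜} {s : Finset ι}

lemma exists_pos_iff_of_shatters [DecidableEq ι] (hs : (positivePatterns f).Shatters s)
    (P : ι → Prop) : ∃ x, ∀ k ∈ s, 0 < f k x ↔ P k := by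
  classical
  obtain ⟨u, hu, hsu⟩ := hs (filter_subset P s)
  simp only [positivePatterns, mem_filter, mem_univ, true_and] at hu
  obtain ⟨x, rfl⟩ := hu
  exact ⟨x, fun k hk => by simpa [hk] using congr(k ∈ $hsu)⟩

variable [IsStrictOrderedRing 𝕜]

/-- If `∑ g k • f k` is constant, no two points can realise the patterns `{0 < g}` and `{g < 0}`. -/
lemma linearIndepOn_linear_of_shatters [DecidableEq ι] (hs : (positivePatterns f).Shatters s) :
    LinearIndepOn 𝕜 (fun k => (f k).linear) (s : Set ι) := by
  rw [linearIndepOn_finset_iff]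
  intro g hg i hi
  by_contra hgi
  obtain ⟨x, hx⟩ := exists_pos_iff_of_shatters hs (0 < g ·)
  obtain ⟨y, hy⟩ := exists_pos_iff_of_shatters hs (g · < 0)
  have term_pos : ∀ k ∈ s, g k ≠ 0 → 0 < g k * (f k x - f k y) := by
    intro k hk hgk
    rcases hgk.lt_or_gt with hneg | hpos
    · have hyk := (hy k hk).2 hneg
      have hxk := not_lt.1 (mt (hx k hk).1 hneg.not_gt)
      exact mul_pos_of_neg_of_neg hneg (by linarith)
    · have hxk := (hx k hk).2 hpos
      have hyk := not_lt.1 (mt (hy k hk).1 hpos.not_gt)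
      exact mul_pos hpos (by linarith)
  have sum_eq_zero : ∑ k ∈ s, g k * (f k x - f k y) = 0 := by
    simp_rw [← vsub_eq_sub, ← AffineMap.linearMap_vsub]
    simpa using congr($hg (x -ᵥ y))
  refine sum_eq_zero.not_gt (sum_pos' (fun k hk => ?_) ⟨i, hi, term_pos i hi hgi⟩)
  by_cases hgk : g k = 0
  · simp [hgk]
  · exact (term_pos k hk hgk).le

lemma vcDim_positivePatterns_le [DecidableEq ι] [FiniteDimensional 𝕜 E] (f : ι → E →ᵃ[𝕜] 𝕜) :
    (positivePatterns f).vcDim ≤ finrank 𝕜 E :=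
  Finset.sup_le fun s hs => by
    have hindep := linearIndepOn_linear_of_shatters (mem_shatterer.1 hs)
    simpa [Subspace.dual_finrank_eq] using hindep.linearIndependent.fintype_card_le_finrank

lemma card_positivePatterns_le [FiniteDimensional 𝕜 E] (f : ι → E →ᵃ[𝕜] 𝕜) :
    #(positivePatterns f) ≤ ∑ k ∈ Iic (finrank 𝕜 E), (Fintype.card ι).choose k := by
  classical
  calc #(positivePatterns f) ≤ #(positivePatterns f).shatterer := card_le_card_shatterer _
    _ ≤ ∑ k ∈ Iic (positivePatterns f).vcDim, (Fintype.card ι).choose k :=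
      card_shatterer_le_sum_vcDim
    _ ≤ ∑ k ∈ Iic (finrank 𝕜 E), (Fintype.card ι).choose k :=
      sum_le_sum_of_subset (Iic_subset_Iic.2 (vcDim_positivePatterns_le f))

end SignPatterns

section ComplementComponents

lemma exists_mem_coe_eq_connectedComponent {X : Type*} [TopologicalSpace X]
    [LocallyConnectedSpace X] {s : Set X} (hs : Dense s) (c : ConnectedComponents X) :
    ∃ x ∈ s, (x : ConnectedComponents X) = c := by
  obtain ⟨y, rfl⟩ := ConnectedComponents.surjective_coe c
  obtain ⟨x, hx, hxs⟩ := hs.exists_mem_open isOpen_connectedComponent ⟨y, mem_connectedComponent⟩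
  exact ⟨x, hx, ConnectedComponents.coe_eq_coe'.2 hxs⟩

lemma dense_setOf_affineMap_ne_zero {E : Type*} [AddCommGroup E] [Module ℝ E]
    [TopologicalSpace E] [IsTopologicalAddGroup E] [ContinuousSMul ℝ E]
    (f : E →ᵃ[ℝ] ℝ) (hf : f.linear ≠ 0) : Dense {x | f x ≠ 0} := by
  have hopen : IsOpenMap f := AffineMap.isOpenMap_linear_iff.1
    (f.linear.isOpenMap_of_finiteDimensional (LinearMap.surjective hf))
  exact (dense_compl_singleton (0 : ℝ)).preimage hopen

variable {ι E : Type*} [NormedAddCommGroup E] [NormedSpace ℝ E] [FiniteDimensional ℝ E]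

lemma dense_setOf_forall_affineMap_ne_zero [Countable ι] {f : ι → E →ᵃ[ℝ] ℝ}
    (hf : ∀ k, (f k).linear ≠ 0) : Dense {x | ∀ k, f k x ≠ 0} := by
  rw [Set.ofPred_forall]
  exact dense_iInter_of_isOpen
    (fun k => isOpen_ne_fun (f k).continuous_of_finiteDimensional continuous_const)
    fun k => dense_setOf_affineMap_ne_zero (f k) (hf k)

variable [Fintype ι] {A : Set E}

lemma mk_connectedComponents_compl_le_sum_choose (hA : IsClosed A) {f : ι → E →ᵃ[ℝ] ℝ}
    (hf : ∀ k, (f k).linear ≠ 0) (hcover : ∀ x ∈ A, ∃ k, f k x = 0) :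
    Cardinal.mk (ConnectedComponents ↥Aᶜ) ≤
      (∑ k ∈ Iic (finrank ℝ E), (Fintype.card ι).choose k : ℕ) := by
  have : LocallyPathConnectedSpace ↥Aᶜ := hA.isOpen_compl.locallyPathConnectedSpace
  have hsub : {x | ∀ k, f k x ≠ 0} ⊆ Aᶜ := fun x hx hxA =>
    let ⟨k, hk⟩ := hcover x hxA
    hx k hk
  have hdense := (dense_setOf_forall_affineMap_ne_zero hf).preimage
    hA.isOpen_compl.isOpenMap_subtype_val
  choose x hx hxc using exists_mem_coe_eq_connectedComponent hdense
  let pattern (c : ConnectedComponents ↥Aᶜ) : positivePatterns f :=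
    ⟨({k | 0 < f k (x c)} : Finset ι), by simp [positivePatterns]⟩
  have pattern_injective : Function.Injective pattern := by
    intro c c' h
    have hpos (k : ι) : 0 < f k (x c) ↔ 0 < f k (x c') := by
      simpa [pattern] using congr(k ∈ $h.1)
    have hjoined : JoinedIn Aᶜ (x c : E) (x c') := JoinedIn.of_segment_subset
      ((segment_subset_of_pos_iff_pos (hx c) (hx c') hpos).trans hsub)
    rw [← hxc c, ← hxc c', ConnectedComponents.coe_eq_coe, connectedComponent_eq_iff_joined]
    exact hjoined.joined_subtype
  have : Finite (ConnectedComponents ↥Aᶜ) := .of_injective pattern pattern_injective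
  rw [← Nat.cast_card, Nat.cast_le]
  refine (Nat.card_le_card_of_injective pattern pattern_injective).trans ?_
  simpa using card_positivePatterns_le f

lemma mk_connectedComponents_compl_le_of_subset_lines (hE : finrank ℝ E = 2) (hA : IsClosed A)
    (q d : ι → E) (hcover : ∀ x ∈ A, ∃ k, ∃ t : ℝ, x = q k + t • d k) :
    Cardinal.mk (ConnectedComponents ↥Aᶜ) ≤
      (1 + Fintype.card ι + (Fintype.card ι).choose 2 : ℕ) := by
  choose f hf hfline using fun k => exists_affineMap_eq_zero_on_line (𝕜 := ℝ) (by omega) (q k) (d k)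
  have hle := mk_connectedComponents_compl_le_sum_choose hA hf fun x hx => by
    obtain ⟨k, t, rfl⟩ := hcover x hx
    exact ⟨k, hfline k t⟩
  have hIic : Iic 2 = ({0, 1, 2} : Finset ℕ) := by decide
  simpa [hE, hIic, add_assoc] using hle

end ComplementComponents

section Laminar

variable {α : Type*} {F : Finset (Finset α)} {J : Finset α}

/-- A family of finite sets is laminar if any two members that meet are comparable for inclusion. -/
def IsLaminar (F : Finset (Finset α)) : Prop :=
  ∀ C ∈ F, ∀ D ∈ F, ∀ k ∈ C, k ∈ D → C ⊆ D ∨ D ⊆ C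

namespace IsLaminar

lemma mono {G : Finset (Finset α)} (hF : IsLaminar F) (hG : G ⊆ F) : IsLaminar G :=
  fun C hC D hD => hF C (hG hC) D (hG hD)

lemma image_erase [DecidableEq α] (hF : IsLaminar F) (x : α) :
    IsLaminar (F.image (·.erase x)) := by
  simp only [IsLaminar, forall_mem_image]
  intro C hC D hD k hkC hkD
  exact (hF C hC D hD k (mem_of_mem_erase hkC) (mem_of_mem_erase hkD)).imp
    (erase_subset_erase x) (erase_subset_erase x)

lemma insert_of_forall_subset [DecidableEq α] (hF : IsLaminar F)
    (hJ : ∀ C ∈ F, C ⊆ J) : IsLaminar (insert J F) := by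
  simp only [IsLaminar, forall_mem_insert]
  exact ⟨⟨fun _ _ _ => .inl subset_rfl, fun D hD _ _ _ => .inr (hJ D hD)⟩,
    fun C hC => ⟨fun _ _ _ => .inl (hJ C hC), hF C hC⟩⟩

lemma card_memberSubfamily_inter_nonMemberSubfamily_le_one [DecidableEq α] (hF : IsLaminar F)
    (hne : ∅ ∉ F) (x : α) : #(F.memberSubfamily x ∩ F.nonMemberSubfamily x) ≤ 1 := by
  have eq_of_subset : ∀ C D, C ∈ F → D ∈ F → insert x C ∈ F → x ∉ D → C ⊆ D → C = D := by
    intro C D hC hD hxC hxD hCD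
    obtain ⟨k, hk⟩ := nonempty_of_ne_empty (ne_of_mem_of_not_mem hC hne)
    rcases hF _ hxC D hD k (mem_insert_of_mem hk) (hCD hk) with h | h
    · exact absurd (h (mem_insert_self x C)) hxD
    · exact hCD.antisymm ((subset_insert_iff_of_notMem hxD).1 h)
  rw [card_le_one]
  simp only [mem_inter, mem_memberSubfamily, mem_nonMemberSubfamily]
  rintro C ⟨⟨hxCF, hxC⟩, hC, -⟩ D ⟨⟨hxDF, hxD⟩, hD, -⟩
  rcases hF _ hxCF _ hxDF x (mem_insert_self x C) (mem_insert_self x D) with h | h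
  · exact eq_of_subset C D hC hD hxCF hxD ((insert_subset_insert_iff hxC).1 h)
  · exact (eq_of_subset D C hD hC hxDF hxC ((insert_subset_insert_iff hxD).1 h)).symm

lemma card_le_card_image_erase_add_one [DecidableEq α] (hF : IsLaminar F) (hne : ∅ ∉ F)
    (x : α) : #F ≤ #(F.image (·.erase x)) + 1 := by
  rw [← card_memberSubfamily_add_card_nonMemberSubfamily x,
    ← memberSubfamily_union_nonMemberSubfamily, ← card_union_add_card_inter]
  gcongr
  exact hF.card_memberSubfamily_inter_nonMemberSubfamily_le_one hne x

lemma card_lt_two_mul_card (hJ : J.Nonempty) (hF : IsLaminar F) (hne : ∅ ∉ F)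
    (hsub : ∀ C ∈ F, C ⊆ J) : #F < 2 * #J := by
  classical
  induction hJ using Finset.Nonempty.cons_induction generalizing F with
  | singleton x =>
    have hFx : F ⊆ {{x}} := fun C hC => mem_singleton.2 <|
      (nonempty_of_ne_empty (ne_of_mem_of_not_mem hC hne)).subset_singleton_iff.1 (hsub C hC)
    simpa [Nat.lt_succ_iff] using card_le_card hFx
  | cons x J hx _ ih =>
    have himage : #((F.image (·.erase x)).erase ∅) < 2 * #J := by
      refine ih ((hF.image_erase x).mono (erase_subset _ _)) (notMem_erase _ _) fun C hC => ?_
      obtain ⟨D, hD, rfl⟩ := mem_image.1 (mem_of_mem_erase hC)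
      exact subset_insert_iff.1 (cons_eq_insert x J hx ▸ hsub D hD)
    have hF_le := hF.card_le_card_image_erase_add_one hne x
    have himage_le := pred_card_le_card_erase (s := F.image (·.erase x)) (a := ∅)
    rw [card_cons]
    omega

lemma card_add_two_le_two_mul_card (hJ : J.Nonempty) (hF : IsLaminar F) (hne : ∅ ∉ F)
    (hsub : ∀ C ∈ F, C ⊂ J) : #F + 2 ≤ 2 * #J := by
  classical
  have hlt := card_lt_two_mul_card hJ (hF.insert_of_forall_subset fun C hC => (hsub C hC).subset)
    (by simp [hne, hJ.ne_empty.symm]) (by simpa using fun C hC => (hsub C hC).subset)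
  rw [card_insert_of_notMem fun hJF => (hsub J hJF).ne rfl] at hlt
  omega

end IsLaminar

end Laminar

section PiecewiseAffine

variable {κ E : Type*} [AddCommGroup E] [Module ℝ E] [TopologicalSpace E]
  [IsTopologicalAddGroup E] [ContinuousSMul ℝ E] [T2Space E]

lemma eqOn_closure_fiber_of_affine_on_fibers {f : ℝ → E} (hf : Continuous f) {c : ℝ → κ}
    {d : κ → E} (h : ∀ r s, c r = c s → f r = f s + (r - s) • d (c s)) (s : ℝ) :
    Set.EqOn f (fun r => f s + (r - s) • d (c s)) (closure (c ⁻¹' {c s})) :=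
  Set.EqOn.closure (fun r hr => h r s hr) hf (by fun_prop)

/-- Each fibre of `c` may fail to be closed, but `f` stays affine on its closure, and an affine
image of a closed set of reals is closed. -/
lemma isClosed_range_of_affine_on_fibers [Finite κ] {f : ℝ → E} (hf : Continuous f) {c : ℝ → κ}
    {d : κ → E} (h : ∀ r s, c r = c s → f r = f s + (r - s) • d (c s)) :
    IsClosed (Set.range f) := by
  have hrange : Set.range f = ⋃ k, f '' closure (c ⁻¹' {k}) :=
    (Set.range_subset_iff.2 fun r =>
      Set.mem_iUnion_of_mem (c r) (Set.mem_image_of_mem f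
        (subset_closure (Set.mem_singleton (c r))))).antisymm
      (Set.iUnion_subset fun k => Set.image_subset_range _ _)
  rw [hrange]
  refine isClosed_iUnion_of_finite fun k => ?_
  rcases (c ⁻¹' {k}).eq_empty_or_nonempty with hk | ⟨s, rfl⟩
  · simp [hk]
  · rw [(eqOn_closure_fiber_of_affine_on_fibers hf h s).image_eq]
    have hline : IsClosedMap fun r : ℝ => f s + (r - s) • d (c s) :=
      (Homeomorph.addLeft (f s)).isClosedMap.comp
        ((isClosedMap_smul_left (d (c s))).comp (Homeomorph.subRight s).isClosedMap)
    exact hline _ isClosed_closure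

end PiecewiseAffine

section PadicBall

variable {p : ℕ} [Fact p.Prime] {r s : ℝ} {x y : ℚ}

/-- The open `p`-adic disc `{x | r < v_p x}` about `0` in `ℚ`. The element `0` is added explicitly
because `padicValRat p 0 = 0` stands for `v_p 0 = ∞`. -/
def padicBall (p : ℕ) [Fact p.Prime] (r : ℝ) : AddSubgroup ℚ where
  carrier := {x | x = 0 ∨ r < padicValRat p x}
  zero_mem' := .inl rfl
  neg_mem' := by simp [padicValRat.neg]
  add_mem' := by
    rintro x y (rfl | hx) (rfl | hy)
    · simp
    · simpa using .inr hy
    · simpa using .inr hx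
    · refine or_iff_not_imp_left.2 fun hxy => ?_
      have hmin : ((min (padicValRat p x) (padicValRat p y) : ℤ) : ℝ) ≤ padicValRat p (x + y) :=
        Int.cast_le.2 (padicValRat.min_le_padicValRat_add hxy)
      rw [Int.cast_min] at hmin
      exact (lt_min hx hy).trans_le hmin

lemma mem_padicBall : x ∈ padicBall p r ↔ x = 0 ∨ r < padicValRat p x := Iff.rfl

lemma notMem_padicBall : x ∉ padicBall p r ↔ x ≠ 0 ∧ padicValRat p x ≤ r := by
  simp [mem_padicBall]

lemma padicBall_anti (hrs : r ≤ s) : padicBall p s ≤ padicBall p r :=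
  fun _ hx => hx.imp_right hrs.trans_lt

lemma padicValRat_add_eq_of_mem_padicBall (hx : x ∉ padicBall p r) (hy : y ∈ padicBall p r) :
    padicValRat p (x + y) = padicValRat p x := by
  have hxy : x + y ≠ 0 := fun h => hx (eq_neg_of_add_eq_zero_left h ▸ neg_mem hy)
  obtain ⟨hx0, hxr⟩ := notMem_padicBall.1 hx
  rcases eq_or_ne y 0 with rfl | hy0
  · rw [add_zero]
  · have hry := hy.resolve_left hy0
    exact padicValRat.add_eq_of_lt hxy hx0 hy0 (by exact_mod_cast hxr.trans_lt hry)

lemma isOpen_setOf_mem_padicBall (x : ℚ) : IsOpen {r | x ∈ padicBall p r} := by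
  rcases eq_or_ne x 0 with rfl | hx
  · simp
  · simp only [mem_padicBall, hx, false_or]
    exact isOpen_Iio

end PadicBall

section Cluster

variable {p : ℕ} [Fact p.Prime] {N : ℕ} {a b : Fin N → ℚ} {i i' j k : Fin N} {r s : ℝ}

/-- The indices `j` whose root `z_j` lies in the open disc of valuative radius `r` about `z_i`.
These are the `j` for which `g_{i,j}` still has slope `1` just after `r`. -/
noncomputable def cluster (p : ℕ) [Fact p.Prime] (a b : Fin N → ℚ) (i : Fin N) (r : ℝ) :
    Finset (Fin N) :=
  open Classical in {j | a j ≠ 0 ∧ zrt a b i - zrt a b j ∈ padicBall p r}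

lemma mem_cluster :
    j ∈ cluster p a b i r ↔ a j ≠ 0 ∧ zrt a b i - zrt a b j ∈ padicBall p r := by
  simp [cluster]

lemma self_mem_cluster (hi : a i ≠ 0) (r : ℝ) : i ∈ cluster p a b i r :=
  mem_cluster.2 ⟨hi, by simp [zero_mem]⟩

lemma cluster_subset_cluster (hrs : r ≤ s) (hk : k ∈ cluster p a b i r)
    (hk' : k ∈ cluster p a b i' s) : cluster p a b i' s ⊆ cluster p a b i r := by
  intro j hj
  rw [mem_cluster] at hj hk hk' ⊢
  have hsum := add_mem hk.2 (padicBall_anti hrs (sub_mem hj.2 hk'.2))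
  exact ⟨hj.1, by rwa [sub_sub_sub_cancel_left, sub_add_sub_cancel] at hsum⟩

lemma cluster_eq_of_mem (hi' : i' ∈ cluster p a b i r) :
    cluster p a b i' r = cluster p a b i r :=
  have hself := self_mem_cluster (mem_cluster.1 hi').1 r
  (cluster_subset_cluster le_rfl hi' hself).antisymm (cluster_subset_cluster le_rfl hself hi')

/-- All clusters around the roots `z_i` of the non-constant forms, for all radii. -/
noncomputable def clusters (p : ℕ) [Fact p.Prime] (a b : Fin N → ℚ) : Finset (Finset (Fin N)) :=
  open Classical in {C | ∃ i r, a i ≠ 0 ∧ cluster p a b i r = C}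

lemma mem_clusters {C : Finset (Fin N)} :
    C ∈ clusters p a b ↔ ∃ i r, a i ≠ 0 ∧ cluster p a b i r = C := by
  simp [clusters]

lemma empty_notMem_clusters : ∅ ∉ clusters p a b := by
  simp only [mem_clusters, not_exists, not_and]
  exact fun i r hi => ne_empty_of_mem (self_mem_cluster hi r)

lemma isLaminar_clusters : IsLaminar (clusters p a b) := by
  intro C hC D hD k hkC hkD
  obtain ⟨i, r, -, rfl⟩ := mem_clusters.1 hC
  obtain ⟨i', s, -, rfl⟩ := mem_clusters.1 hD
  rcases le_total r s with hrs | hsr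
  · exact .inr (cluster_subset_cluster hrs hkC hkD)
  · exact .inl (cluster_subset_cluster hsr hkD hkC)

lemma card_clusters_le_two_mul_card : #(clusters p a b) ≤ 2 * #{j | a j ≠ 0} := by
  rcases (clusters p a b).eq_empty_or_nonempty with hempty | ⟨C, hC⟩
  · simp [hempty]
  obtain ⟨i, r, hi, -⟩ := mem_clusters.1 hC
  refine (isLaminar_clusters.card_lt_two_mul_card ⟨i, by simpa using hi⟩ empty_notMem_clusters
    fun D hD j hj => ?_).le
  obtain ⟨i', s, -, rfl⟩ := mem_clusters.1 hD
  simpa using (mem_cluster.1 hj).1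

lemma card_clusters_erase_univ_add_two_le [NeZero N] :
    #((clusters p a b).erase univ) + 2 ≤ 2 * N := by
  have hsub := erase_subset univ (clusters p a b)
  simpa using (isLaminar_clusters.mono hsub).card_add_two_le_two_mul_card univ_nonempty
    (fun h => empty_notMem_clusters (hsub h)) fun C hC => ssubset_univ_iff.2 (ne_of_mem_erase hC)

end Cluster

section Parametrization

variable {p : ℕ} {N : ℕ} {a b : Fin N → ℚ} {i i' j : Fin N} {r s : ℝ}

lemma continuous_phiMap (p : ℕ) (a b : Fin N → ℚ) (i : Fin N) : Continuous (phiMap p a b i) := by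
  have hg (j : Fin N) : Continuous (gfun p a b i j) := by
    unfold gfun
    split_ifs <;> fun_prop
  unfold phiMap
  fun_prop

lemma phiMap_eq_sum_smul (p : ℕ) (a b : Fin N → ℚ) (i : Fin N) (r : ℝ) :
    phiMap p a b i r = ∑ j, gfun p a b i j r • ((a j : ℝ), (b j : ℝ)) := by
  ext <;> simp [phiMap, Prod.fst_sum, Prod.snd_sum, mul_comm]

variable [Fact p.Prime]

lemma gfun_of_mem_cluster (hj : j ∈ cluster p a b i r) :
    gfun p a b i j r = padicValRat p (a j) + r := by
  obtain ⟨haj, hroot | hlt⟩ := mem_cluster.1 hj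
  · simp [gfun, haj, (sub_eq_zero.1 hroot).symm]
  · simp [gfun, haj, min_eq_left hlt.le]

lemma gfun_of_notMem_cluster (haj : a j ≠ 0) (hj : j ∉ cluster p a b i r) :
    gfun p a b i j r = padicValRat p (a j) + padicValRat p (zrt a b i - zrt a b j) := by
  obtain ⟨hroot, hle⟩ := notMem_padicBall.1 fun h => hj (mem_cluster.2 ⟨haj, h⟩)
  simp [gfun, haj, (sub_ne_zero.1 hroot).symm, min_eq_right hle]

lemma gfun_eq_add_of_cluster_eq (h : cluster p a b i r = cluster p a b i s) (j : Fin N) :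
    gfun p a b i j r = gfun p a b i j s + if j ∈ cluster p a b i s then r - s else 0 := by
  split_ifs with hj
  · rw [gfun_of_mem_cluster hj, gfun_of_mem_cluster (h ▸ hj)]
    ring
  · by_cases haj : a j = 0
    · simp [gfun, haj]
    · rw [gfun_of_notMem_cluster haj hj, gfun_of_notMem_cluster haj (h ▸ hj), add_zero]

lemma gfun_eq_of_mem_cluster (hi' : i' ∈ cluster p a b i r) (j : Fin N) :
    gfun p a b i' j r = gfun p a b i j r := by
  have hC := cluster_eq_of_mem hi'
  by_cases haj : a j = 0
  · simp [gfun, haj]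
  by_cases hj : j ∈ cluster p a b i r
  · rw [gfun_of_mem_cluster hj, gfun_of_mem_cluster (hC ▸ hj)]
  · rw [gfun_of_notMem_cluster haj hj, gfun_of_notMem_cluster haj (hC ▸ hj)]
    have hfar : zrt a b i' - zrt a b j ∉ padicBall p r := fun h =>
      hj (hC ▸ mem_cluster.2 ⟨haj, h⟩)
    rw [← padicValRat_add_eq_of_mem_padicBall hfar (mem_cluster.1 hi').2,
      add_comm (zrt a b i' - zrt a b j), sub_add_sub_cancel]

/-- The velocity of `φ_i` on the radii at which the cluster of `i` is `C`. -/
noncomputable def clusterDirection (a b : Fin N → ℚ) (C : Finset (Fin N)) : ℝ × ℝ :=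
  ∑ j ∈ C, ((a j : ℝ), (b j : ℝ))

lemma clusterDirection_univ (ha : ∑ j, a j = 0) (hb : ∑ j, b j = 0) :
    clusterDirection a b univ = 0 := by
  ext
  · simpa [clusterDirection, Prod.fst_sum] using congr((($ha : ℚ) : ℝ))
  · simpa [clusterDirection, Prod.snd_sum] using congr((($hb : ℚ) : ℝ))

lemma phiMap_eq_add_smul (h : cluster p a b i r = cluster p a b i s) :
    phiMap p a b i r =
      phiMap p a b i s + (r - s) • clusterDirection a b (cluster p a b i s) := by
  simp_rw [phiMap_eq_sum_smul, gfun_eq_add_of_cluster_eq h, add_smul, sum_add_distrib, ite_smul,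
    zero_smul, sum_ite_mem, univ_inter, clusterDirection, smul_sum]

lemma phiMap_eq_add_smul_of_cluster_eq (hi' : a i' ≠ 0)
    (h : cluster p a b i r = cluster p a b i' s) :
    phiMap p a b i r =
      phiMap p a b i' s + (r - s) • clusterDirection a b (cluster p a b i' s) := by
  have hmem : i' ∈ cluster p a b i r := h ▸ self_mem_cluster hi' s
  have hphi : phiMap p a b i' r = phiMap p a b i r := by
    simp_rw [phiMap_eq_sum_smul, gfun_eq_of_mem_cluster hmem]
  rw [← hphi, phiMap_eq_add_smul ((cluster_eq_of_mem hmem).trans h)]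

lemma exists_line_of_cluster (p : ℕ) [Fact p.Prime] (a b : Fin N → ℚ) (C : Finset (Fin N)) :
    ∃ q : ℝ × ℝ, ∀ i r, a i ≠ 0 → cluster p a b i r = C →
      phiMap p a b i r = q + r • clusterDirection a b C := by
  by_cases hC : ∃ i s, a i ≠ 0 ∧ cluster p a b i s = C
  · obtain ⟨i', s, hi', rfl⟩ := hC
    refine ⟨phiMap p a b i' s - s • clusterDirection a b (cluster p a b i' s), fun i r _ h => ?_⟩
    rw [phiMap_eq_add_smul_of_cluster_eq hi' h, sub_smul]
    abel
  · exact ⟨0, fun i r hi h => absurd ⟨i, r, hi, h⟩ hC⟩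

end Parametrization

section Amoeba

variable {p : ℕ} [Fact p.Prime]

lemma isClosed_amoeba {N : ℕ} (a b : Fin N → ℚ) : IsClosed (amoeba p a b) := by
  have hunion : amoeba p a b = ⋃ i ∈ {i | a i ≠ 0}, Set.range (phiMap p a b i) := by
    ext y
    simp [amoeba]
  rw [hunion]
  exact Set.toFinite _ |>.isClosed_biUnion fun i _ =>
    isClosed_range_of_affine_on_fibers (continuous_phiMap p a b i) fun _ _ => phiMap_eq_add_smul

/-- As `r` grows, `φ_i` waits at one point until the first root leaves the cluster of `i`. -/
lemma exists_phiMap_eq_of_cluster_ne_univ {N : ℕ} {a b : Fin N → ℚ} (ha : ∑ j, a j = 0)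
    (hb : ∑ j, b j = 0) (hne : ∀ j, a j ≠ 0) {i k : Fin N} (hk : zrt a b k ≠ zrt a b i) (r : ℝ) :
    ∃ s, cluster p a b i s ≠ univ ∧ phiMap p a b i s = phiMap p a b i r := by
  by_cases hr : cluster p a b i r = univ
  · have hopen : IsOpen (cluster p a b i ⁻¹' {univ}) := by
      have hset : cluster p a b i ⁻¹' {univ} =
          ⋂ j, {s | zrt a b i - zrt a b j ∈ padicBall p s} := by
        ext s
        simp [eq_univ_iff_forall, mem_cluster, hne]
      rw [hset]
      exact isOpen_iInter_of_finite fun j => isOpen_setOf_mem_padicBall _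
    have hne_univ : cluster p a b i ⁻¹' {univ} ≠ Set.univ := fun h => by
      have hR : cluster p a b i (padicValRat p (zrt a b i - zrt a b k)) = univ :=
        Set.eq_univ_iff_forall.1 h _
      have hmem := (mem_cluster.1 (hR ▸ mem_univ k)).2
      exact notMem_padicBall.2 ⟨sub_ne_zero.2 hk.symm, le_rfl⟩ hmem
    have hnot_closed : ¬ IsClosed (cluster p a b i ⁻¹' {univ}) := fun hclosed =>
      (isClopen_iff.1 ⟨hclosed, hopen⟩).elim (Set.Nonempty.ne_empty ⟨r, hr⟩) hne_univ
    obtain ⟨s, hs, hs'⟩ := Set.not_subset.1 (mt closure_subset_iff_isClosed.1 hnot_closed)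
    refine ⟨s, hs', ?_⟩
    have hphi := eqOn_closure_fiber_of_affine_on_fibers (continuous_phiMap p a b i)
      (fun _ _ => phiMap_eq_add_smul) r (hr ▸ hs)
    simpa [hr, clusterDirection_univ ha hb] using hphi
  · exact ⟨r, hr, rfl⟩

lemma exists_clusters_cover {m : ℕ} {a b : Fin (m + 1) → ℚ} (ha : ∑ j, a j = 0)
    (hb : ∑ j, b j = 0) :
    ∃ F : Finset (Finset (Fin (m + 1))), #F ≤ 2 * m ∧ ∀ y ∈ amoeba p a b,
      ∃ i r, a i ≠ 0 ∧ cluster p a b i r ∈ F ∧ phiMap p a b i r = y := by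
  by_cases hzero : ∃ j, a j = 0
  · obtain ⟨j, hj⟩ := hzero
    refine ⟨clusters p a b, card_clusters_le_two_mul_card.trans ?_, ?_⟩
    · have hlt : #{j | a j ≠ 0} < #(univ : Finset (Fin (m + 1))) :=
        card_lt_card (filter_ssubset.2 ⟨j, mem_univ j, by simpa using hj⟩)
      rw [card_fin] at hlt
      omega
    · rintro y ⟨i, hi, r, rfl⟩
      exact ⟨i, r, hi, mem_clusters.2 ⟨i, r, hi, rfl⟩, rfl⟩
  push Not at hzero
  by_cases hroots : ∀ i k, zrt a b k = zrt a b i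
  · have hm : m ≠ 0 := by
      rintro rfl
      exact hzero 0 (by simpa using ha)
    refine ⟨{univ}, by rw [card_singleton]; omega, ?_⟩
    rintro y ⟨i, hi, r, rfl⟩
    refine ⟨i, r, hi, ?_, rfl⟩
    simp [eq_univ_iff_forall, mem_cluster, hzero, hroots i, zero_mem]
  · refine ⟨(clusters p a b).erase univ, ?_, ?_⟩
    · have hcard := card_clusters_erase_univ_add_two_le (p := p) (a := a) (b := b)
      omega
    · rintro y ⟨i, hi, r, rfl⟩
      obtain ⟨k, hk⟩ : ∃ k, zrt a b k ≠ zrt a b i := by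
        by_contra! hall
        exact hroots fun i' k => (hall k).trans (hall i').symm
      obtain ⟨s, hs, hphi⟩ := exists_phiMap_eq_of_cluster_ne_univ (p := p) ha hb hzero hk r
      exact ⟨i, s, hi, mem_erase.2 ⟨hs, mem_clusters.2 ⟨i, s, hi, rfl⟩⟩, hphi⟩

end Amoeba

theorem stmt3_general (p m : ℕ) (hp : p.Prime) (a b : Fin (m + 1) → ℚ)
    (ha : ∑ j, a j = 0) (hb : ∑ j, b j = 0) :
    Cardinal.mk (ConnectedComponents ↥((amoeba p a b)ᶜ)) ≤
      ((2 * m ^ 2 + m + 1 : ℕ) : Cardinal) := by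
  have : Fact p.Prime := ⟨hp⟩
  obtain ⟨F, hF, hcover⟩ := exists_clusters_cover (p := p) ha hb
  choose q hq using exists_line_of_cluster p a b
  have hle := mk_connectedComponents_compl_le_of_subset_lines (ι := F) (by simp)
    (isClosed_amoeba (p := p) a b) (fun C => q C) (fun C => clusterDirection a b C) fun y hy => by
      obtain ⟨i, r, hi, hC, rfl⟩ := hcover y hy
      exact ⟨⟨_, hC⟩, r, hq _ i r hi rfl⟩
  refine hle.trans (Nat.cast_le.2 ?_)
  calc 1 + Fintype.card F + (Fintype.card F).choose 2
      ≤ 1 + 2 * m + (2 * m).choose 2 := by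
        rw [Fintype.card_coe]
        gcongr
    _ = 1 + 2 * m + m * (2 * m - 1) := by
        rw [Nat.choose_two_right, mul_assoc, Nat.mul_div_cancel_left _ two_pos]
    _ = 2 * m ^ 2 + m + 1 := by
        cases m <;> grind

theorem stmt3 (p n : ℕ) (hp : p.Prime) (hn : 1 ≤ n)
    (a b : Fin (n + 3) → ℚ)
    (ha : ∑ j, a j = 0) (hb : ∑ j, b j = 0)
    (hab : ∀ j, (a j, b j) ≠ ((0 : ℚ), (0 : ℚ)))
    (h0 : ∀ j k, a j = 0 → a k = 0 → j = k) :
    Cardinal.mk (ConnectedComponents ↥((amoeba p a b)ᶜ))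
      ≤ ((2 * n ^ 2 + 9 * n + 11 : ℕ) : Cardinal) := by
  convert stmt3_general p (n + 2) hp a b ha hb using 2
  ring
end
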